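/- Let Π ⊆ ℝ^d be a nonempty closed convex set, δ ∈ (0,1), r ≥ 0, σ an invertible d×d real matrix, z ∈ ℝ^d, and let 𝔹 = ∏ᵢ [b̲ⁱ, b̄ⁱ] be a box in ℝ^d with b̲ⁱ ≤ b̄ⁱ for each i. Suppose p* ∈ Π and b* ∈ 𝔹 satisfy: (i) σᵀp* is the point of σᵀΠ = { σᵀp : p ∈ Π } nearest to v* = (σ⁻¹(b* − r𝟙) + z)/(1−δ) in Euclidean distance; and (ii) for each coordinate i, if p*ⁱ < 0 then b*ⁱ = b̄ⁱ, and if p*ⁱ > 0 then b*ⁱ = b̲ⁱ. Then (p*, b*) is a saddle point of H(z; ·, ·) on Π × 𝔹: for every p ∈ Π and b ∈ 𝔹, H(z; p, b*) ≤ H(z; p*, b*) ≤ H(z; p*, b). -/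

import Mathlib

open Matrix

/-- Matrix–vector multiplication on Euclidean space. -/
noncomputable def mvE {d : ℕ} (M : Matrix (Fin d) (Fin d) ℝ) (v : EuclideanSpace ℝ (Fin d)) :
    EuclideanSpace ℝ (Fin d) :=
  (WithLp.equiv 2 (Fin d → ℝ)).symm (M.mulVec (WithLp.equiv 2 (Fin d → ℝ) v))

/-- Euclidean dot product `xᵀ y`. -/
noncomputable def dotE {d : ℕ} (x y : EuclideanSpace ℝ (Fin d)) : ℝ := ∑ i, x i * y i

/-!
Let `(1 - δ) σ v = b* - c + σ z` with `c = r𝟙`; for invertible `σ` this says `v = v*`. Completing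
the square turns `p ↦ H(z; p, b*)` into a constant minus `δ (1 - δ) / 2 * ‖σᵀ p - v‖ ^ 2`, so it is
maximal where `σᵀ p` is nearest to `v`. As a function of `b`, `H(z; p*, b)` is increasing in
`⟪p*, b⟫`, which is minimised over a box one coordinate at a time, according to the sign of `p*ⁱ`.
-/

open InnerProductSpace ContinuousLinearMap

section Hamiltonian

variable {E F : Type*} [NormedAddCommGroup E] [InnerProductSpace ℝ E] [CompleteSpace E]
  [NormedAddCommGroup F] [InnerProductSpace ℝ F] [CompleteSpace F]

/-- The Hamiltonian `H(z; p, b)` for a volatility operator `σ` between real Hilbert spaces. The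
vector `c` stands for `r𝟙`, which has no meaning without coordinates. -/
noncomputable def hamiltonian (δ r : ℝ) (σ : F →L[ℝ] E) (c : E) (z : F) (p b : E) : ℝ :=
  1 / 2 * δ * (δ - 1) * ⟪p, σ (adjoint σ p)⟫_ℝ + δ * ⟪p, b - c⟫_ℝ + δ * ⟪p, σ z⟫_ℝ + δ * r

variable {δ : ℝ} (r : ℝ) (σ : F →L[ℝ] E) (c : E) (z : F)

lemma hamiltonian_eq_sub_norm_sub_sq {v : F} {b : E} (hv : (1 - δ) • σ v = b - c + σ z) (p : E) :
    hamiltonian δ r σ c z p b =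
      δ * r + δ * (1 - δ) / 2 * ‖v‖ ^ 2 - δ * (1 - δ) / 2 * ‖adjoint σ p - v‖ ^ 2 := by
  have quadratic : ⟪p, σ (adjoint σ p)⟫_ℝ = ‖adjoint σ p‖ ^ 2 := by
    rw [← adjoint_inner_left, real_inner_self_eq_norm_sq]
  have linear : ⟪p, b - c⟫_ℝ + ⟪p, σ z⟫_ℝ = (1 - δ) * ⟪adjoint σ p, v⟫_ℝ := by
    rw [← inner_add_right, ← hv, real_inner_smul_right, adjoint_inner_left]
  rw [hamiltonian, quadratic, norm_sub_sq_real]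
  linear_combination δ * linear

lemma hamiltonian_le_hamiltonian_of_norm_sub_le (hδ : δ ∈ Set.Icc 0 1) {v : F} {b : E}
    (hv : (1 - δ) • σ v = b - c + σ z) {p q : E}
    (hpq : ‖adjoint σ q - v‖ ≤ ‖adjoint σ p - v‖) :
    hamiltonian δ r σ c z p b ≤ hamiltonian δ r σ c z q b := by
  have coeff_nonneg : 0 ≤ δ * (1 - δ) / 2 :=
    div_nonneg (mul_nonneg hδ.1 (sub_nonneg.2 hδ.2)) zero_le_two
  rw [hamiltonian_eq_sub_norm_sub_sq r σ c z hv, hamiltonian_eq_sub_norm_sub_sq r σ c z hv]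
  gcongr

lemma hamiltonian_le_hamiltonian_of_inner_le (hδ : 0 ≤ δ) {p b b' : E}
    (h : ⟪p, b⟫_ℝ ≤ ⟪p, b'⟫_ℝ) :
    hamiltonian δ r σ c z p b ≤ hamiltonian δ r σ c z p b' := by
  simp only [hamiltonian, inner_sub_right]
  gcongr

end Hamiltonian

lemma inner_le_inner_of_forall_sign {ι : Type*} [Fintype ι] {p b b' : EuclideanSpace ℝ ι}
    (hneg : ∀ i, p i < 0 → b' i ≤ b i) (hpos : ∀ i, 0 < p i → b i ≤ b' i) :
    ⟪p, b⟫_ℝ ≤ ⟪p, b'⟫_ℝ := by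
  simp only [PiLp.inner_apply, RCLike.inner_apply', conj_trivial]
  refine Finset.sum_le_sum fun i _ => ?_
  rcases lt_trichotomy (p i) 0 with hi | hi | hi
  · exact mul_le_mul_of_nonpos_left (hneg i hi) hi.le
  · simp [hi]
  · exact mul_le_mul_of_nonneg_left (hpos i hi) hi.le

theorem stmt_11_general {ι F : Type*} [Fintype ι]
    [NormedAddCommGroup F] [InnerProductSpace ℝ F] [CompleteSpace F]
    {δ : ℝ} (hδ : δ ∈ Set.Icc 0 1) (r : ℝ) (σ : F →L[ℝ] EuclideanSpace ℝ ι)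
    (c : EuclideanSpace ℝ ι) (z : F) {P : Set (EuclideanSpace ℝ ι)} {bl bu : ι → ℝ}
    {pstar bstar : EuclideanSpace ℝ ι} {vstar : F}
    (hvstar : (1 - δ) • σ vstar = bstar - c + σ z)
    (hproj : ‖adjoint σ pstar - vstar‖ = Metric.infDist vstar (adjoint σ '' P))
    (hcoord : ∀ i, (pstar i < 0 → bstar i = bu i) ∧ (0 < pstar i → bstar i = bl i)) :
    ∀ p ∈ P, ∀ b : EuclideanSpace ℝ ι, (∀ i, b i ∈ Set.Icc (bl i) (bu i)) →
      hamiltonian δ r σ c z p bstar ≤ hamiltonian δ r σ c z pstar bstar ∧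
        hamiltonian δ r σ c z pstar bstar ≤ hamiltonian δ r σ c z pstar b := by
  intro p hp b hb
  constructor
  · have nearest : ‖adjoint σ pstar - vstar‖ ≤ ‖adjoint σ p - vstar‖ := by
      rw [hproj, ← dist_eq_norm']
      exact Metric.infDist_le_dist_of_mem (Set.mem_image_of_mem _ hp)
    exact hamiltonian_le_hamiltonian_of_norm_sub_le r σ c z hδ hvstar nearest
  · have bang_bang : ⟪pstar, bstar⟫_ℝ ≤ ⟪pstar, b⟫_ℝ :=
      inner_le_inner_of_forall_sign (fun i hi => (hb i).2.trans_eq ((hcoord i).1 hi).symm)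
        (fun i hi => ((hcoord i).2 hi).trans_le (hb i).1)
    exact hamiltonian_le_hamiltonian_of_inner_le r σ c z hδ.1 bang_bang

section Coordinates

variable {d : ℕ}

lemma dotE_eq_inner (x y : EuclideanSpace ℝ (Fin d)) : dotE x y = ⟪x, y⟫_ℝ := by
  simp only [dotE, PiLp.inner_apply, RCLike.inner_apply', conj_trivial]

lemma mvE_eq_toEuclideanCLM (M : Matrix (Fin d) (Fin d) ℝ) :
    mvE M = toEuclideanCLM (𝕜 := ℝ) M := rfl

lemma mvE_transpose_eq_adjoint (M : Matrix (Fin d) (Fin d) ℝ) :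
    mvE Mᵀ = adjoint (toEuclideanCLM (𝕜 := ℝ) M) := by
  rw [← star_eq_adjoint, ← map_star, star_eq_conjTranspose, conjTranspose_eq_transpose_of_trivial,
    mvE_eq_toEuclideanCLM]

lemma mvE_mul (M N : Matrix (Fin d) (Fin d) ℝ) (x : EuclideanSpace ℝ (Fin d)) :
    mvE (M * N) x = mvE M (mvE N x) := by
  simp only [mvE_eq_toEuclideanCLM, map_mul, mul_apply_eq_comp]

lemma mvE_mvE_nonsing_inv {M : Matrix (Fin d) (Fin d) ℝ} (hM : IsUnit M.det)
    (x : EuclideanSpace ℝ (Fin d)) : mvE M (mvE M⁻¹ x) = x := by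
  rw [← mvE_mul, mul_nonsing_inv M hM, mvE_eq_toEuclideanCLM, map_one, one_apply_eq_self]

lemma hamiltonian_toEuclideanCLM (δ r : ℝ) (σ : Matrix (Fin d) (Fin d) ℝ)
    (c z p b : EuclideanSpace ℝ (Fin d)) :
    hamiltonian δ r (toEuclideanCLM (𝕜 := ℝ) σ) c z p b =
      1 / 2 * δ * (δ - 1) * dotE p (mvE (σ * σᵀ) p) + δ * dotE p (b - c) +
        δ * dotE p (mvE σ z) + δ * r := by
  rw [hamiltonian, mvE_mul, mvE_transpose_eq_adjoint, mvE_eq_toEuclideanCLM]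
  simp only [dotE_eq_inner]

lemma smul_mvE_smul_nonsing_inv_add {δ : ℝ} (hδ : δ ≠ 1) {σ : Matrix (Fin d) (Fin d) ℝ}
    (hσ : IsUnit σ.det) (x z : EuclideanSpace ℝ (Fin d)) :
    (1 - δ) • mvE σ ((1 / (1 - δ)) • (mvE σ⁻¹ x + z)) = x + mvE σ z := by
  have hδ' : 1 - δ ≠ 0 := sub_ne_zero.2 hδ.symm
  conv_rhs => rw [← mvE_mvE_nonsing_inv hσ x]
  simp only [mvE_eq_toEuclideanCLM, map_smul, map_add, smul_smul, mul_one_div_cancel hδ', one_smul]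

end Coordinates

/-- if `σᵀp*` is the nearest point of `σᵀΠ` to
`v* = (σ⁻¹(b* − r𝟙) + z)/(1−δ)` and `b*` satisfies the coordinatewise bang-bang
conditions, then `(p*, b*)` is a saddle point of `H(z; ·, ·)` on `Π × 𝔹`,
where `𝔹 = ∏ᵢ [b̲ⁱ, b̄ⁱ]`. -/
theorem stmt_11 (d : ℕ) (δ r : ℝ) (hδ : δ ∈ Set.Ioo (0 : ℝ) 1) (hr : 0 ≤ r)
    (σ : Matrix (Fin d) (Fin d) ℝ) (hσ : IsUnit σ.det)
    (Pset : Set (EuclideanSpace ℝ (Fin d))) (hPne : Pset.Nonempty)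
    (hPclosed : IsClosed Pset) (hPconv : Convex ℝ Pset)
    (z : EuclideanSpace ℝ (Fin d))
    (ones : EuclideanSpace ℝ (Fin d)) (hones : ∀ i, ones i = 1)
    (bl bu : Fin d → ℝ) (hblu : ∀ i, bl i ≤ bu i)
    (Bset : Set (EuclideanSpace ℝ (Fin d)))
    (hBset : Bset = {b : EuclideanSpace ℝ (Fin d) | ∀ i, b i ∈ Set.Icc (bl i) (bu i)})
    (H : EuclideanSpace ℝ (Fin d) → EuclideanSpace ℝ (Fin d) → ℝ)
    (hH : ∀ p b, H p b = 1 / 2 * δ * (δ - 1) * dotE p (mvE (σ * σᵀ) p)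
      + δ * dotE p (b - r • ones) + δ * dotE p (mvE σ z) + δ * r)
    (pstar : EuclideanSpace ℝ (Fin d)) (hpstar : pstar ∈ Pset)
    (bstar : EuclideanSpace ℝ (Fin d)) (hbstar : bstar ∈ Bset)
    (vstar : EuclideanSpace ℝ (Fin d))
    (hvstar : vstar = (1 / (1 - δ)) • (mvE σ⁻¹ (bstar - r • ones) + z))
    (hproj : ‖mvE σᵀ pstar - vstar‖ = Metric.infDist vstar ((fun p => mvE σᵀ p) '' Pset))
    (hcoord : ∀ i, (pstar i < 0 → bstar i = bu i) ∧ (0 < pstar i → bstar i = bl i)) :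
    ∀ p ∈ Pset, ∀ b ∈ Bset, H p bstar ≤ H pstar bstar ∧ H pstar bstar ≤ H pstar b := by
  obtain rfl : H = hamiltonian δ r (toEuclideanCLM (𝕜 := ℝ) σ) (r • ones) z :=
    funext₂ fun p b => (hH p b).trans (hamiltonian_toEuclideanCLM ..).symm
  subst hBset hvstar
  rw [mvE_transpose_eq_adjoint] at hproj
  exact stmt_11_general ⟨hδ.1.le, hδ.2.le⟩ r _ _ z
    (smul_mvE_smul_nonsing_inv_add hδ.2.ne hσ _ z) hproj hcoord
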